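/- Let Λ ∈ ℝ and let m, a, r : (−1, 1) → ℝ be differentiable functions such that for every s: Δ_r(r(s)) = 0 (with parameters m(s), a(s)), Ξ(s) := 1 + a(s)²Λ/3 > 0, and r(s)² + a(s)² > 0. Then for every s: (a/(r² + a²))·(d/ds)(maΞ^{−2}) + (Δ_r′(r)/(4Ξ(r² + a²)))·(d/ds)((r² + a²)/Ξ) = Ξ^{−1/2}·(d/ds)(mΞ^{−3/2}). -/

import Mathlib

/-- The Kerr–de Sitter horizon polynomial `Δ_r = (r² + a²)(1 − Λr²/3) − 2mr`. -/
noncomputable def Δr (Λ m a r : ℝ) : ℝ := (r ^ 2 + a ^ 2) * (1 - Λ / 3 * r ^ 2) - 2 * m * r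

/-- The derivative `Δ_r′ = 2r(1 − Λr²/3) − (2Λr/3)(r² + a²) − 2m` of `Δ_r` in `r`. -/
noncomputable def Δr' (Λ m a r : ℝ) : ℝ :=
  2 * r * (1 - Λ / 3 * r ^ 2) - 2 * Λ * r / 3 * (r ^ 2 + a ^ 2) - 2 * m

/-- For differentiable families `m, a, r : (−1,1) → ℝ` of Kerr–de Sitter
horizon data (`Δ_r(r) = 0`, `Ξ = 1 + a²Λ/3 > 0`, `r² + a² > 0`), one has the identity
`(a/(r²+a²)) d(maΞ⁻²)/ds + (Δ_r′/(4Ξ(r²+a²))) d((r²+a²)/Ξ)/ds = Ξ^{-1/2} d(mΞ^{-3/2})/ds`,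
i.e. the flow of `√Ξ ∂_t` is generated by the Hamiltonian `m Ξ^{-3/2}`. -/
theorem sqrtXi_dt_is_hamiltonian (Λ : ℝ) (m a r : ℝ → ℝ)
    (hm : ∀ s ∈ Set.Ioo (-1 : ℝ) 1, DifferentiableAt ℝ m s)
    (ha : ∀ s ∈ Set.Ioo (-1 : ℝ) 1, DifferentiableAt ℝ a s)
    (hr : ∀ s ∈ Set.Ioo (-1 : ℝ) 1, DifferentiableAt ℝ r s)
    (hΔ : ∀ s ∈ Set.Ioo (-1 : ℝ) 1, Δr Λ (m s) (a s) (r s) = 0)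
    (hΞ : ∀ s ∈ Set.Ioo (-1 : ℝ) 1, 0 < 1 + (a s) ^ 2 * Λ / 3)
    (hra : ∀ s ∈ Set.Ioo (-1 : ℝ) 1, 0 < (r s) ^ 2 + (a s) ^ 2) :
    ∀ s ∈ Set.Ioo (-1 : ℝ) 1,
      (a s / ((r s) ^ 2 + (a s) ^ 2)) *
          deriv (fun t => m t * a t / (1 + (a t) ^ 2 * Λ / 3) ^ 2) s
        + (Δr' Λ (m s) (a s) (r s) /
              (4 * (1 + (a s) ^ 2 * Λ / 3) * ((r s) ^ 2 + (a s) ^ 2))) *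
          deriv (fun t => ((r t) ^ 2 + (a t) ^ 2) / (1 + (a t) ^ 2 * Λ / 3)) s
      = (1 + (a s) ^ 2 * Λ / 3) ^ (-(1 : ℝ) / 2) *
          deriv (fun t => m t * (1 + (a t) ^ 2 * Λ / 3) ^ (-(3 : ℝ) / 2)) s := by
  intro s hs
  have hX := hΞ s hs
  have hR := hra s hs
  have dm := (hm s hs).hasDerivAt
  have da := (ha s hs).hasDerivAt
  have dr := (hr s hs).hasDerivAt
  have hΔs := hΔ s hs
  have dX : HasDerivAt (fun t => 1 + (a t) ^ 2 * Λ / 3) (2 * a s * deriv a s * Λ / 3) s := by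
    refine ((((da.fun_pow 2).mul_const Λ).div_const 3).const_add 1).congr_deriv ?_
    norm_num
  have dR : HasDerivAt (fun t => (r t) ^ 2 + (a t) ^ 2)
      (2 * r s * deriv r s + 2 * a s * deriv a s) s := by
    refine ((dr.fun_pow 2).fun_add (da.fun_pow 2)).congr_deriv ?_
    norm_num
  have dΔ : HasDerivAt (fun t => Δr Λ (m t) (a t) (r t))
      (Δr' Λ (m s) (a s) (r s) * deriv r s
        + 2 * a s * (1 - Λ / 3 * r s ^ 2) * deriv a s - 2 * r s * deriv m s) s := by
    unfold Δr Δr'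
    refine ((dR.fun_mul (((dr.fun_pow 2).const_mul (Λ / 3)).const_sub 1)).fun_sub
      ((dm.const_mul 2).fun_mul dr)).congr_deriv ?_
    norm_num
    ring
  have hcons : Δr' Λ (m s) (a s) (r s) * deriv r s
      + 2 * a s * (1 - Λ / 3 * r s ^ 2) * deriv a s - 2 * r s * deriv m s = 0 := by
    refine (dΔ.congr_of_eventuallyEq ?_).unique (hasDerivAt_const s (0 : ℝ))
    filter_upwards [isOpen_Ioo.mem_nhds hs] with t ht
    exact (hΔ t ht).symm
  have dH := dm.fun_mul (dX.rpow_const (p := -(3 : ℝ) / 2) (Or.inl hX.ne'))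
  rw [((dm.fun_mul da).fun_div (dX.fun_pow 2) (pow_ne_zero 2 hX.ne')).deriv,
    (dR.fun_div dX hX.ne').deriv, dH.deriv]
  have hpow₂ : (1 + (a s) ^ 2 * Λ / 3) ^ (-(1 : ℝ) / 2) *
      (1 + (a s) ^ 2 * Λ / 3) ^ (-(3 : ℝ) / 2) = ((1 + (a s) ^ 2 * Λ / 3) ^ 2)⁻¹ := by
    rw [← Real.rpow_add hX, ← Real.rpow_natCast (1 + (a s) ^ 2 * Λ / 3) 2,
      ← Real.rpow_neg hX.le]
    norm_num
  have hpow₃ : (1 + (a s) ^ 2 * Λ / 3) ^ (-(1 : ℝ) / 2) *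
      (1 + (a s) ^ 2 * Λ / 3) ^ (-(3 : ℝ) / 2 - 1) = ((1 + (a s) ^ 2 * Λ / 3) ^ 3)⁻¹ := by
    rw [← Real.rpow_add hX, ← Real.rpow_natCast (1 + (a s) ^ 2 * Λ / 3) 3,
      ← Real.rpow_neg hX.le]
    norm_num
  have hrhs : (1 + (a s) ^ 2 * Λ / 3) ^ (-(1 : ℝ) / 2) *
      (deriv m s * (1 + (a s) ^ 2 * Λ / 3) ^ (-(3 : ℝ) / 2) +
        m s * (2 * a s * deriv a s * Λ / 3 * (-(3 : ℝ) / 2) *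
          (1 + (a s) ^ 2 * Λ / 3) ^ (-(3 : ℝ) / 2 - 1))) =
      deriv m s * ((1 + (a s) ^ 2 * Λ / 3) ^ 2)⁻¹ -
        m s * a s * deriv a s * Λ * ((1 + (a s) ^ 2 * Λ / 3) ^ 3)⁻¹ := by
    rw [← hpow₂, ← hpow₃]
    ring
  rw [hrhs]
  unfold Δr at hΔs
  unfold Δr' at hcons ⊢
  generalize deriv m s = m' at *
  generalize deriv a s = a' at *
  generalize deriv r s = r' at *
  generalize m s = M at *
  generalize a s = A at *
  generalize r s = ρ at *
  obtain ⟨X, hXdef⟩ : ∃ X, X = 1 + A ^ 2 * Λ / 3 := ⟨_, rfl⟩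
  obtain ⟨R, hRdef⟩ : ∃ R, R = ρ ^ 2 + A ^ 2 := ⟨_, rfl⟩
  rw [← hXdef] at hX ⊢
  rw [← hRdef] at hR hcons hΔs ⊢
  have hX0 := hX.ne'
  have hR0 := hR.ne'
  field_simp
  subst hXdef hRdef
  push_cast
  linear_combination (18 * ρ * (1 + A ^ 2 * Λ / 3) ^ 2) * hcons -
    (24 * Λ * ρ * A * a' * (1 + A ^ 2 * Λ / 3)) * hΔs
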